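/- arXiv:2005.06384 — 5 statements merged into one kernel-verified Lean document; each statement's English description precedes it below -/
import Mathlib

section
/- Let a be a real number with -1 < a < 1 and a ≠ 0. Then for every real x > 0, Γ(a,x) < G_a(x), i.e. ∫_x^∞ t^(a-1) e^(-t) dt < ((x+b_a)^a − x^a) e^(−x)/(a b_a). -/
/-!
Put `b = b_a` and let `q = b⁻¹ 1_{s ≤ b} - e^{-s}` be the difference of the densities on `(0, ∞)` of
the uniform law on `(0, b]` and the exponential law. After the shift `t = x + s`, the difference
`G_a(x) - Γ(a, x)` becomes `e^{-x} ∫ (x + s)^(a-1) q(s) ds`, so this integral has to be positive.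
Since `q` has mean zero, the signs of `q` decide.

* If `b ≤ 1`, then `q` changes sign only at `b`, from `+` to `-`, and it suffices that
  `(x + s)^(a-1)` is decreasing in `s`.
* If `b > 1`, then `a > 0` and `q` has signs `-, +, -`, with changes at `log b` and `b`. The
  equation `b^(a-1) = Γ(a+1)` says exactly that `w = s^(a-1)` is orthogonal to `q`. As a function of
  `w`, `(x + s)^(a-1)` is strictly concave, so subtracting its secant through `s = log b` and
  `s = b` leaves a function with the same signs as `q`.
-/

open Real Filter Set

/-- Upper incomplete gamma function `Γ(a,x) = ∫_x^∞ t^(a-1) e^(-t) dt`. -/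
noncomputable def incGamma (a x : ℝ) : ℝ := ∫ t in Set.Ioi x, t ^ (a - 1) * Real.exp (-t)

/-- `b_a = Γ(a+1)^(1/(a-1))` for `a ≠ 1`, and `b_1 = e^(1-γ)`. -/
noncomputable def bCoef (a : ℝ) : ℝ :=
  if a = 1 then Real.exp (1 - Real.eulerMascheroniConstant)
  else Real.Gamma (a + 1) ^ (1 / (a - 1))

/-- `G_a(x) = ((x+b_a)^a - x^a) e^(-x) / (a b_a)`. -/
noncomputable def Gbound (a x : ℝ) : ℝ :=
  ((x + bCoef a) ^ a - x ^ a) * Real.exp (-x) / (a * bCoef a)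

/-- `g_a(x) = (((x+2)^a - x^a - 2^a)/(2a) + Γ(a)) e^(-x)`. -/
noncomputable def gbound (a x : ℝ) : ℝ :=
  (((x + 2) ^ a - x ^ a - (2 : ℝ) ^ a) / (2 * a) + Real.Gamma a) * Real.exp (-x)

/-- `g_a^lo(x) = x^a e^(-x) (x-a-1) / ((x-a)^2 + a)`. -/
noncomputable def gLo (a x : ℝ) : ℝ :=
  x ^ a * Real.exp (-x) * (x - a - 1) / ((x - a) ^ 2 + a)

/-- `g_a^hi(x) = x^a e^(-x) / (x-a)`. -/
noncomputable def gHi (a x : ℝ) : ℝ := x ^ a * Real.exp (-x) / (x - a)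

open MeasureTheory

section Secant

variable {𝕜 : Type*} [Field 𝕜] [LinearOrder 𝕜] [IsStrictOrderedRing 𝕜]
  {T : Set 𝕜} {F : 𝕜 → 𝕜} {u v w : 𝕜}

/-- The affine function that agrees with `F` at `u` and at `v`, as a function of `w`. For `u = v` it
is the constant `F u`. -/
def secant (F : 𝕜 → 𝕜) (u v w : 𝕜) : 𝕜 := F u + slope F u v * (w - u)

lemma secant_le_of_concaveOn (hF : ConcaveOn 𝕜 T F) (hu : u ∈ T) (hv : v ∈ T)
    (huw : u ≤ w) (hwv : w ≤ v) : secant F u v w ≤ F w := by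
  rcases huw.eq_or_lt with rfl | huw
  · simp [secant]
  have hw : w ∈ T := hF.1.ordConnected.out hu hv ⟨huw.le, hwv⟩
  have hslope : slope F u v ≤ (F w - F u) / (w - u) := by
    simpa only [slope_def_field] using
      hF.slope_anti hu ⟨hw, huw.ne'⟩ ⟨hv, (huw.trans_le hwv).ne'⟩ hwv
  rw [le_div_iff₀ (sub_pos.2 huw)] at hslope
  rw [secant]
  linear_combination hslope

lemma lt_secant_of_strictConcaveOn_of_lt_left (hF : StrictConcaveOn 𝕜 T F) (hw : w ∈ T)
    (hv : v ∈ T) (hwu : w < u) (huv : u < v) : F w < secant F u v w := by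
  have hslope : slope F u v < (F u - F w) / (u - w) := by
    simpa only [slope_def_field] using hF.slope_anti_adjacent hw hv hwu huv
  rw [lt_div_iff₀ (sub_pos.2 hwu)] at hslope
  rw [secant]
  linear_combination hslope

lemma lt_secant_of_strictConcaveOn_of_right_lt (hF : StrictConcaveOn 𝕜 T F) (hu : u ∈ T)
    (hw : w ∈ T) (huv : u < v) (hvw : v < w) : F w < secant F u v w := by
  have hv : v ∈ T := hF.1.ordConnected.out hu hw ⟨huv.le, hvw.le⟩
  have hslope : (F w - F u) / (w - u) < slope F u v := by
    simpa only [slope_def_field] using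
      hF.secant_strict_mono hu hv hw huv.ne' (huv.trans hvw).ne' hvw
  rw [div_lt_iff₀ (sub_pos.2 (huv.trans hvw))] at hslope
  rw [secant]
  linear_combination hslope

end Secant

section SignChange

variable {α : Type*} [MeasurableSpace α] {μ : Measure α} {S : Set α} {f g q : α → ℝ}

lemma setIntegral_mul_pos_of_sub_mul_nonneg (hS : MeasurableSet S)
    (hf : IntegrableOn (fun s => f s * q s) S μ) (hg : IntegrableOn (fun s => g s * q s) S μ)
    (hg0 : ∫ s in S, g s * q s ∂μ = 0) (hnonneg : ∀ s ∈ S, 0 ≤ (f s - g s) * q s)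
    (hpos : μ {s ∈ S | 0 < (f s - g s) * q s} ≠ 0) : 0 < ∫ s in S, f s * q s ∂μ := by
  have hsub : ∫ s in S, (f s - g s) * q s ∂μ = ∫ s in S, f s * q s ∂μ := by
    simp only [sub_mul]
    rw [integral_sub hf hg, hg0, sub_zero]
  have hint : IntegrableOn (fun s => (f s - g s) * q s) S μ := by
    simp only [sub_mul]
    exact hf.sub hg
  rw [← hsub, setIntegral_pos_iff_support_of_nonneg_ae
    (ae_restrict_of_forall_mem hS hnonneg) hint, pos_iff_ne_zero]
  refine fun hnull => hpos (measure_mono_null ?_ hnull)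
  exact fun s hs => ⟨hs.2.ne', hs.1⟩

variable [LinearOrder α] {c d : α}

theorem setIntegral_mul_pos_of_strictAntiOn (hS : MeasurableSet S) (hd : d ∈ S)
    (hμ : μ (S ∩ Ioi d) ≠ 0) (hf : StrictAntiOn f S) (hq : IntegrableOn q S μ)
    (hfq : IntegrableOn (fun s => f s * q s) S μ) (hq0 : ∫ s in S, q s ∂μ = 0)
    (hleft : ∀ s ∈ S, s ≤ d → 0 ≤ q s) (hright : ∀ s ∈ S, d < s → q s < 0) :
    0 < ∫ s in S, f s * q s ∂μ := by
  have hpos : ∀ s ∈ S, d < s → 0 < (f s - f d) * q s := fun s hs hds =>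
    mul_pos_of_neg_of_neg (sub_neg.2 (hf hd hs hds)) (hright s hs hds)
  refine setIntegral_mul_pos_of_sub_mul_nonneg (g := fun _ => f d) hS hfq (hq.const_mul _)
    (by rw [integral_const_mul, hq0, mul_zero]) (fun s hs => ?_)
    (ne_bot_of_le_ne_bot hμ <| measure_mono fun s hs => ⟨hs.1, hpos s hs.1 hs.2⟩)
  rcases le_or_gt s d with hsd | hds
  · exact mul_nonneg (sub_nonneg.2 (hf.antitoneOn hs hd hsd)) (hleft s hs hsd)
  · exact (hpos s hs hds).le

theorem setIntegral_comp_mul_pos_of_strictConcaveOn {T : Set ℝ} {F : ℝ → ℝ} {w : α → ℝ}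
    (hS : MeasurableSet S) (hc : c ∈ S) (hd : d ∈ S) (hcd : c < d) (hμ : μ (S ∩ Ioi d) ≠ 0)
    (hF : StrictConcaveOn ℝ T F) (hw : StrictAntiOn w S) (hwT : MapsTo w S T)
    (hq : IntegrableOn q S μ) (hwq : IntegrableOn (fun s => w s * q s) S μ)
    (hFq : IntegrableOn (fun s => F (w s) * q s) S μ)
    (hq0 : ∫ s in S, q s ∂μ = 0) (hwq0 : ∫ s in S, w s * q s ∂μ = 0)
    (hleft : ∀ s ∈ S, s < c → q s ≤ 0) (hmid : ∀ s ∈ S, c ≤ s → s ≤ d → 0 ≤ q s)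
    (hright : ∀ s ∈ S, d < s → q s < 0) :
    0 < ∫ s in S, F (w s) * q s ∂μ := by
  have hwcd : w d < w c := hw hc hd hcd
  have hsecant (s : α) : secant F (w d) (w c) (w s) * q s =
      (F (w d) - slope F (w d) (w c) * w d) * q s + slope F (w d) (w c) * (w s * q s) := by
    rw [secant]; ring
  have hpos : ∀ s ∈ S, d < s → 0 < (F (w s) - secant F (w d) (w c) (w s)) * q s :=
    fun s hs hds => mul_pos_of_neg_of_neg (sub_neg.2 <|
      lt_secant_of_strictConcaveOn_of_lt_left hF (hwT hs) (hwT hc) (hw hd hs hds) hwcd)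
      (hright s hs hds)
  refine setIntegral_mul_pos_of_sub_mul_nonneg (g := fun s => secant F (w d) (w c) (w s)) hS hFq
    ?_ ?_ (fun s hs => ?_)
    (ne_bot_of_le_ne_bot hμ <| measure_mono fun s hs => ⟨hs.1, hpos s hs.1 hs.2⟩)
  · simp only [hsecant]
    exact (hq.const_mul _).add (hwq.const_mul _)
  · simp only [hsecant]
    rw [integral_add (hq.const_mul _) (hwq.const_mul _), integral_const_mul, integral_const_mul,
      hq0, hwq0, mul_zero, mul_zero, add_zero]
  · rcases lt_or_ge s c with hsc | hcs
    · exact mul_nonneg_of_nonpos_of_nonpos (sub_nonpos.2 <|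
        (lt_secant_of_strictConcaveOn_of_right_lt hF (hwT hd) (hwT hs) hwcd (hw hs hc hsc)).le)
        (hleft s hs hsc)
    rcases le_or_gt s d with hsd | hds
    · exact mul_nonneg (sub_nonneg.2 <| secant_le_of_concaveOn hF.concaveOn (hwT hd) (hwT hc)
        (hw.antitoneOn hs hd hsd) (hw.antitoneOn hc hs hcs)) (hmid s hs hcs hsd)
    · exact (hpos s hs hds).le

end SignChange

section ShiftedPower

variable {p x w : ℝ}

lemma hasDerivAt_add_rpow_inv_rpow (hp : p ≠ 0) (hx : 0 ≤ x) (hw : 0 < w) :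
    HasDerivAt (fun w : ℝ => (x + w ^ p⁻¹) ^ p) ((w ^ p⁻¹ / (x + w ^ p⁻¹)) ^ (1 - p)) w := by
  have hy : 0 < w ^ p⁻¹ := rpow_pos_of_pos hw _
  have hxy : 0 < x + w ^ p⁻¹ := add_pos_of_nonneg_of_pos hx hy
  have hinner : w ^ (p⁻¹ - 1) = (w ^ p⁻¹) ^ (1 - p) := by
    rw [← rpow_mul hw.le, mul_sub, mul_one, inv_mul_cancel₀ hp]
  have houter : (x + w ^ p⁻¹) ^ (p - 1) = ((x + w ^ p⁻¹) ^ (1 - p))⁻¹ := by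
    rw [← rpow_neg hxy.le, neg_sub]
  convert ((hasDerivAt_rpow_const (Or.inl hw.ne')).const_add x).rpow_const (Or.inl hxy.ne') using 1
  rw [div_rpow hy.le hxy.le, hinner, houter]
  field_simp

theorem strictConcaveOn_add_rpow_inv_rpow (hp : p < 0) (hx : 0 < x) :
    StrictConcaveOn ℝ (Ioi 0) fun w : ℝ => (x + w ^ p⁻¹) ^ p := by
  refine StrictAntiOn.strictConcaveOn_of_deriv (convex_Ioi 0) (fun w hw =>
    (hasDerivAt_add_rpow_inv_rpow hp.ne hx.le hw).continuousAt.continuousWithinAt) ?_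
  rw [interior_Ioi]
  intro u hu v hv huv
  rw [(hasDerivAt_add_rpow_inv_rpow hp.ne hx.le hu).deriv,
    (hasDerivAt_add_rpow_inv_rpow hp.ne hx.le hv).deriv]
  have hu' : 0 < u ^ p⁻¹ := rpow_pos_of_pos hu _
  have hv' : 0 < v ^ p⁻¹ := rpow_pos_of_pos hv _
  have hlt : v ^ p⁻¹ < u ^ p⁻¹ := rpow_lt_rpow_of_neg hu huv (inv_lt_zero.2 hp)
  have hdiv : v ^ p⁻¹ / (x + v ^ p⁻¹) < u ^ p⁻¹ / (x + u ^ p⁻¹) := by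
    rw [div_lt_div_iff₀ (by positivity) (by positivity)]
    linear_combination x * hlt
  exact rpow_lt_rpow (by positivity) hdiv (by linarith)

lemma strictAntiOn_add_rpow (hp : p < 0) (hx : 0 ≤ x) :
    StrictAntiOn (fun s : ℝ => (x + s) ^ p) (Ioi 0) := fun _ hs _ _ hst =>
  rpow_lt_rpow_of_neg (add_pos_of_nonneg_of_pos hx hs) (add_lt_add_right hst x) hp

end ShiftedPower

section DensityDiff

variable {b s : ℝ} {f : ℝ → ℝ}

/-- On `(0, ∞)`, the density of the uniform law on `(0, b]` minus the density of the exponential law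
of rate `1`. For `s ≤ 0` the value is not the difference of these densities; integrals against
`densityDiff b` are taken over `Ioi 0`. -/
noncomputable def densityDiff (b s : ℝ) : ℝ := (Iic b).indicator (fun _ => b⁻¹) s - exp (-s)

lemma densityDiff_neg (hs : b < s) : densityDiff b s < 0 := by
  simp [densityDiff, hs, exp_pos]

lemma densityDiff_nonneg (hb : 0 < b) (hlog : log b ≤ s) (hs : s ≤ b) : 0 ≤ densityDiff b s := by
  have hexp : exp (-s) ≤ b⁻¹ := by
    rw [exp_neg]
    exact inv_anti₀ hb ((log_le_iff_le_exp hb).1 hlog)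
  simpa [densityDiff, hs] using hexp

lemma densityDiff_nonpos (hb : 0 < b) (hs : s ≤ log b) : densityDiff b s ≤ 0 := by
  have hexp : b⁻¹ ≤ exp (-s) := by
    rw [exp_neg]
    exact inv_anti₀ (exp_pos s) ((le_log_iff_exp_le hb).1 hs)
  exact sub_nonpos.2 ((indicator_le_self' (fun _ _ => (inv_pos.2 hb).le) s).trans hexp)

lemma intervalIntegrable_of_mul_exp_neg (hb : 0 ≤ b)
    (hf : IntegrableOn (fun s => f s * exp (-s)) (Ioi 0)) : IntervalIntegrable f volume 0 b := by
  have hIcc : IntegrableOn (fun s => f s * exp (-s)) (Icc 0 b) :=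
    (integrableOn_Icc_iff_integrableOn_Ioc (by simp)).2 (hf.mono_set Ioc_subset_Ioi_self)
  rw [intervalIntegrable_iff_integrableOn_Icc_of_le hb]
  simpa [mul_assoc, ← exp_add] using
    hIcc.mul_continuousOn (g' := exp) continuous_exp.continuousOn isCompact_Icc

lemma integrableOn_indicator_Iic_of_mul_exp_neg (hb : 0 ≤ b)
    (hf : IntegrableOn (fun s => f s * exp (-s)) (Ioi 0)) :
    IntegrableOn ((Iic b).indicator f) (Ioi 0) := by
  rw [IntegrableOn, integrable_indicator_iff measurableSet_Iic, IntegrableOn,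
    Measure.restrict_restrict measurableSet_Iic, inter_comm, Ioi_inter_Iic]
  exact (intervalIntegrable_iff_integrableOn_Ioc_of_le hb).1
    (intervalIntegrable_of_mul_exp_neg hb hf)

lemma mul_densityDiff (f : ℝ → ℝ) (b s : ℝ) :
    f s * densityDiff b s = b⁻¹ * (Iic b).indicator f s - f s * exp (-s) := by
  by_cases hs : s ≤ b <;> simp [densityDiff, hs, mul_sub, mul_comm]

lemma integrableOn_mul_densityDiff (hb : 0 ≤ b)
    (hf : IntegrableOn (fun s => f s * exp (-s)) (Ioi 0)) :
    IntegrableOn (fun s => f s * densityDiff b s) (Ioi 0) := by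
  simp only [mul_densityDiff]
  exact ((integrableOn_indicator_Iic_of_mul_exp_neg hb hf).const_mul _).sub hf

lemma setIntegral_mul_densityDiff (hb : 0 ≤ b)
    (hf : IntegrableOn (fun s => f s * exp (-s)) (Ioi 0)) :
    ∫ s in Ioi 0, f s * densityDiff b s =
      b⁻¹ * (∫ s in 0..b, f s) - ∫ s in Ioi 0, f s * exp (-s) := by
  simp only [mul_densityDiff]
  rw [integral_sub ((integrableOn_indicator_Iic_of_mul_exp_neg hb hf).const_mul _) hf,
    integral_const_mul, setIntegral_indicator measurableSet_Iic, Ioi_inter_Iic,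
    intervalIntegral.integral_of_le hb]

lemma integrableOn_densityDiff (hb : 0 ≤ b) : IntegrableOn (densityDiff b) (Ioi 0) := by
  simpa using integrableOn_mul_densityDiff (f := fun _ => 1) hb
    (by simpa using integrableOn_exp_neg_Ioi 0)

lemma setIntegral_densityDiff (hb : 0 < b) : ∫ s in Ioi 0, densityDiff b s = 0 := by
  have hint : IntegrableOn (fun s : ℝ => 1 * exp (-s)) (Ioi 0) := by
    simpa using integrableOn_exp_neg_Ioi 0
  have hone := setIntegral_mul_densityDiff hb.le hint
  simp only [one_mul] at hone
  rw [hone, integral_exp_neg_Ioi_zero, intervalIntegral.integral_const, sub_zero, smul_eq_mul,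
    mul_one, inv_mul_cancel₀ hb.ne', sub_self]

theorem setIntegral_mul_densityDiff_pos_of_strictAntiOn (hb : 0 < b) (hb1 : b ≤ 1)
    (hf : StrictAntiOn f (Ioi 0)) (hint : IntegrableOn (fun s => f s * exp (-s)) (Ioi 0)) :
    0 < ∫ s in Ioi 0, f s * densityDiff b s :=
  setIntegral_mul_pos_of_strictAntiOn (d := b) measurableSet_Ioi hb
    (by simp [Ioi_inter_Ioi]) hf (integrableOn_densityDiff hb.le)
    (integrableOn_mul_densityDiff hb.le hint) (setIntegral_densityDiff hb)
    (fun s hs => densityDiff_nonneg hb ((log_nonpos hb.le hb1).trans (le_of_lt hs)))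
    fun _ _ => densityDiff_neg

theorem setIntegral_comp_mul_densityDiff_pos_of_strictConcaveOn {T : Set ℝ} {F w : ℝ → ℝ}
    (hb : 1 < b) (hF : StrictConcaveOn ℝ T F) (hw : StrictAntiOn w (Ioi 0))
    (hwT : MapsTo w (Ioi 0) T) (hwint : IntegrableOn (fun s => w s * exp (-s)) (Ioi 0))
    (hFint : IntegrableOn (fun s => F (w s) * exp (-s)) (Ioi 0))
    (hw0 : ∫ s in Ioi 0, w s * densityDiff b s = 0) :
    0 < ∫ s in Ioi 0, F (w s) * densityDiff b s := by
  have hb0 : 0 < b := one_pos.trans hb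
  have hlog : log b < b := (log_lt_sub_one_of_pos hb0 hb.ne').trans (sub_one_lt b)
  exact setIntegral_comp_mul_pos_of_strictConcaveOn (c := log b) (d := b) measurableSet_Ioi
    (log_pos hb) hb0 hlog (by simp [Ioi_inter_Ioi]) hF hw hwT
    (integrableOn_densityDiff hb0.le) (integrableOn_mul_densityDiff hb0.le hwint)
    (integrableOn_mul_densityDiff hb0.le hFint) (setIntegral_densityDiff hb0) hw0
    (fun _ _ hs => densityDiff_nonpos hb0 hs.le) (fun _ _ => densityDiff_nonneg hb0)
    fun _ _ => densityDiff_neg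

end DensityDiff

section Gamma

variable {a b x : ℝ}

lemma integrableOn_rpow_sub_one_mul_exp_neg (ha : 0 < a) :
    IntegrableOn (fun s : ℝ => s ^ (a - 1) * exp (-s)) (Ioi 0) := by
  simpa only [mul_comm] using Real.GammaIntegral_convergent ha

theorem setIntegral_rpow_mul_densityDiff (ha : 0 < a) (hb : 0 < b) :
    ∫ s in Ioi 0, s ^ (a - 1) * densityDiff b s = (b ^ (a - 1) - Real.Gamma (a + 1)) / a := by
  have hpow : b⁻¹ * b ^ a = b ^ (a - 1) := by rw [rpow_sub_one hb.ne']; ring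
  have hGamma : ∫ s in Ioi 0, s ^ (a - 1) * exp (-s) = Real.Gamma a := by
    simpa only [mul_comm] using (Real.Gamma_eq_integral ha).symm
  rw [setIntegral_mul_densityDiff hb.le (integrableOn_rpow_sub_one_mul_exp_neg ha), hGamma,
    integral_rpow (Or.inl (by linarith)), sub_add_cancel, zero_rpow ha.ne', sub_zero,
    Real.Gamma_add_one ha.ne', ← hpow]
  field_simp

lemma integrableOn_Ioi_rpow_mul_exp_neg (p : ℝ) (hx : 0 < x) :
    IntegrableOn (fun t : ℝ => t ^ p * exp (-t)) (Ioi x) := by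
  refine integrable_of_isBigO_exp_neg (b := 1 / 2) (by norm_num) (fun t ht => ?_) ?_
  · exact ((continuousAt_rpow_const t p (Or.inl (hx.trans_le ht).ne')).mul
      (by fun_prop)).continuousWithinAt
  · simpa only [mul_comm] using (Real.Gamma_integrand_isLittleO p).isBigO

lemma add_rpow_mul_exp_neg (p x s : ℝ) :
    (x + s) ^ p * exp (-s) = exp x * ((x + s) ^ p * exp (-(x + s))) := by
  rw [mul_left_comm, ← exp_add]
  ring_nf

lemma integrableOn_add_rpow_mul_exp_neg (p : ℝ) (hx : 0 < x) :
    IntegrableOn (fun s : ℝ => (x + s) ^ p * exp (-s)) (Ioi 0) := by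
  have hshift := ((measurePreserving_add_left volume x).integrableOn_comp_preimage
    (measurableEmbedding_addLeft x)).2 (integrableOn_Ioi_rpow_mul_exp_neg p hx)
  rw [preimage_const_add_Ioi, sub_self] at hshift
  simp only [add_rpow_mul_exp_neg]
  exact hshift.const_mul _

lemma setIntegral_add_rpow_mul_exp_neg (a x : ℝ) :
    ∫ s in Ioi 0, (x + s) ^ (a - 1) * exp (-s) = exp x * incGamma a x := by
  have hshift := (measurePreserving_add_left volume x).setIntegral_preimage_emb
    (measurableEmbedding_addLeft x) (fun t : ℝ => t ^ (a - 1) * exp (-t)) (Ioi x)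
  rw [preimage_const_add_Ioi, sub_self] at hshift
  simp only [add_rpow_mul_exp_neg]
  rw [integral_const_mul, hshift, incGamma]

lemma intervalIntegral_add_rpow (ha : a ≠ 0) (hx : 0 < x) (hb : 0 ≤ b) :
    ∫ s in 0..b, (x + s) ^ (a - 1) = ((x + b) ^ a - x ^ a) / a := by
  have hx0 : (0 : ℝ) ∉ uIcc x (x + b) := notMem_uIcc_of_lt hx (by linarith)
  rw [intervalIntegral.integral_comp_add_left (fun t : ℝ => t ^ (a - 1)), add_zero,
    integral_rpow (Or.inr ⟨fun h => ha (by linarith), hx0⟩), sub_add_cancel]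

lemma bCoef_eq_rpow (ha : a ≠ 1) : bCoef a = Real.Gamma (a + 1) ^ (a - 1)⁻¹ := by
  rw [bCoef, if_neg ha, one_div]

lemma bCoef_pos (ha : -1 < a) : 0 < bCoef a := by
  have hGamma : 0 < Real.Gamma (a + 1) := Real.Gamma_pos_of_pos (by linarith)
  unfold bCoef
  split_ifs <;> positivity

lemma bCoef_rpow_sub_one (ha : -1 < a) (ha1 : a ≠ 1) :
    bCoef a ^ (a - 1) = Real.Gamma (a + 1) := by
  rw [bCoef_eq_rpow ha1,
    rpow_inv_rpow (Real.Gamma_pos_of_pos (by linarith)).le (sub_ne_zero.2 ha1)]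

lemma bCoef_lt_one_of_neg (ha : -1 < a) (ha0 : a < 0) : bCoef a < 1 := by
  have hGamma : 1 < Real.Gamma (a + 1) := by
    simpa using Real.Gamma_strictAntiOn_Ioc (a := a + 1) (b := 1) ⟨by linarith, by linarith⟩
      (by simp) (by linarith)
  rw [bCoef_eq_rpow (by linarith)]
  exact rpow_lt_one_of_one_lt_of_neg hGamma (inv_lt_zero.2 (by linarith))

theorem Gbound_sub_incGamma (ha : -1 < a) (ha0 : a ≠ 0) (hx : 0 < x) :
    Gbound a x - incGamma a x =
      exp (-x) * ∫ s in Ioi 0, (x + s) ^ (a - 1) * densityDiff (bCoef a) s := by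
  have hb : 0 < bCoef a := bCoef_pos ha
  rw [setIntegral_mul_densityDiff hb.le (integrableOn_add_rpow_mul_exp_neg _ hx),
    setIntegral_add_rpow_mul_exp_neg, intervalIntegral_add_rpow ha0 hx hb.le, Gbound, mul_sub,
    ← mul_assoc (exp (-x)) (exp x), ← exp_add, neg_add_cancel, exp_zero, one_mul]
  field_simp

theorem setIntegral_add_rpow_mul_densityDiff_pos (ha : 0 < a) (ha1 : a < 1) (hx : 0 < x)
    (hb : 1 < b) (hbGamma : b ^ (a - 1) = Real.Gamma (a + 1)) :
    0 < ∫ s in Ioi 0, (x + s) ^ (a - 1) * densityDiff b s := by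
  have hp : a - 1 < 0 := sub_neg.2 ha1
  have hcomp : ∀ s ∈ Ioi (0 : ℝ), (x + (s ^ (a - 1)) ^ (a - 1)⁻¹) ^ (a - 1) = (x + s) ^ (a - 1) :=
    fun s hs => by rw [rpow_rpow_inv (le_of_lt hs) hp.ne]
  have horth : ∫ s in Ioi 0, s ^ (a - 1) * densityDiff b s = 0 := by
    rw [setIntegral_rpow_mul_densityDiff ha (one_pos.trans hb), hbGamma, sub_self, zero_div]
  have hint : IntegrableOn
      (fun s => (x + (s ^ (a - 1)) ^ (a - 1)⁻¹) ^ (a - 1) * exp (-s)) (Ioi 0) :=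
    (integrableOn_add_rpow_mul_exp_neg (a - 1) hx).congr_fun
      (fun s hs => by rw [hcomp s hs]) measurableSet_Ioi
  calc
    0 < ∫ s in Ioi 0, (x + (s ^ (a - 1)) ^ (a - 1)⁻¹) ^ (a - 1) * densityDiff b s :=
      setIntegral_comp_mul_densityDiff_pos_of_strictConcaveOn hb
        (strictConcaveOn_add_rpow_inv_rpow hp hx) (strictAntiOn_rpow_Ioi_of_exponent_neg hp)
        (fun s hs => rpow_pos_of_pos hs _) (integrableOn_rpow_sub_one_mul_exp_neg ha) hint horth
    _ = ∫ s in Ioi 0, (x + s) ^ (a - 1) * densityDiff b s :=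
      setIntegral_congr_fun measurableSet_Ioi fun s hs => by rw [hcomp s hs]

end Gamma

theorem stmt0 (a : ℝ) (ha1 : -1 < a) (ha2 : a < 1) (ha0 : a ≠ 0) :
    ∀ x : ℝ, 0 < x → incGamma a x < Gbound a x := by
  intro x hx
  rw [← sub_pos, Gbound_sub_incGamma ha1 ha0 hx]
  refine mul_pos (exp_pos _) ?_
  rcases le_or_gt (bCoef a) 1 with hb | hb
  · exact setIntegral_mul_densityDiff_pos_of_strictAntiOn (bCoef_pos ha1) hb
      (strictAntiOn_add_rpow (sub_neg.2 ha2) hx.le) (integrableOn_add_rpow_mul_exp_neg _ hx)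
  · have ha : 0 < a := ha0.lt_or_gt.resolve_left fun h => hb.not_gt (bCoef_lt_one_of_neg ha1 h)
    exact setIntegral_add_rpow_mul_densityDiff_pos ha ha2 hx hb (bCoef_rpow_sub_one ha1 ha2.ne)
end

section
/- For every real x > 0, Γ(0,x) < e^(−x) · ln((x+1)/x), i.e. ∫_x^∞ t^(-1) e^(-t) dt < e^(−x) ln((x+1)/x). -/
/-!
The function `G t = e^(-t) log ((t+1)/t)` vanishes at infinity, and
`-G' t = e^(-t) (log ((t+1)/t) + 1/t - 1/(t+1))`. Since `log u > 1 - 1/u` for `u ≠ 1`, here with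
`u = (t+1)/t`, this strictly exceeds the integrand `e^(-t)/t` of `Γ(0,x)`, so integrating over
`(x, ∞)` gives `Γ(0,x) < G x`.
-/

open Real Filter Set

section StrictComparison

open MeasureTheory

theorem integral_lt_integral_of_ae_lt {α : Type*} [MeasurableSpace α] {μ : Measure α} {f g : α → ℝ}
    (hμ : μ ≠ 0) (hf : Integrable f μ) (hg : Integrable g μ) (hfg : ∀ᵐ t ∂μ, f t < g t) :
    ∫ t, f t ∂μ < ∫ t, g t ∂μ := by
  have hle : f ≤ᵐ[μ] g := hfg.mono fun _ ht => ht.le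
  refine (integral_mono_ae hf hg hle).lt_of_ne fun heq => hμ ?_
  have hae : f =ᵐ[μ] g := (integral_eq_iff_of_ae_le hf hg hle).1 heq
  have hfalse : ∀ᵐ _ ∂μ, False := by
    filter_upwards [hfg, hae] with t hlt heq using hlt.ne heq
  rwa [eventually_false_iff_eq_bot, ae_eq_bot] at hfalse

theorem integral_Ioi_lt_sub_of_lt_deriv {F F' f : ℝ → ℝ} {a l : ℝ}
    (hderiv : ∀ t ∈ Ici a, HasDerivAt F (F' t) t) (hlim : Tendsto F atTop (nhds l))
    (hf : AEStronglyMeasurable f (volume.restrict (Ioi a)))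
    (hf_nonneg : ∀ t ∈ Ioi a, 0 ≤ f t) (hlt : ∀ t ∈ Ioi a, f t < F' t) :
    ∫ t in Ioi a, f t < l - F a := by
  have hF'_nonneg : ∀ t ∈ Ioi a, 0 ≤ F' t := fun t ht => (hf_nonneg t ht).trans (hlt t ht).le
  have hF'_int : IntegrableOn F' (Ioi a) := integrableOn_Ioi_deriv_of_nonneg' hderiv hF'_nonneg hlim
  have hf_int : IntegrableOn f (Ioi a) := by
    refine hF'_int.mono' hf (ae_restrict_of_forall_mem measurableSet_Ioi fun t ht => ?_)
    simpa only [Real.norm_of_nonneg (hf_nonneg t ht)] using (hlt t ht).le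
  rw [← integral_Ioi_of_hasDerivAt_of_nonneg' hderiv hF'_nonneg hlim]
  exact integral_lt_integral_of_ae_lt (by simp) hf_int hF'_int
    (ae_restrict_of_forall_mem measurableSet_Ioi hlt)

end StrictComparison

theorem incGamma_lt_of_lt_neg_deriv {G G' : ℝ → ℝ} {a x : ℝ} (hx : 0 ≤ x)
    (hderiv : ∀ t ∈ Ici x, HasDerivAt G (G' t) t) (hlim : Tendsto G atTop (nhds 0))
    (hlt : ∀ t ∈ Ioi x, t ^ (a - 1) * Real.exp (-t) < -G' t) :
    incGamma a x < G x := by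
  have hnonneg : ∀ t ∈ Ioi x, 0 ≤ t ^ (a - 1) * Real.exp (-t) := fun t ht =>
    mul_nonneg (Real.rpow_nonneg (hx.trans (le_of_lt ht)) _) (Real.exp_nonneg _)
  simpa [incGamma] using integral_Ioi_lt_sub_of_lt_deriv (fun t ht => (hderiv t ht).neg) hlim.neg
    (by fun_prop) hnonneg hlt

theorem one_sub_inv_lt_log_of_pos {u : ℝ} (hu : 0 < u) (hu_ne : u ≠ 1) :
    1 - u⁻¹ < Real.log u := by
  have h := Real.log_lt_sub_one_of_pos (inv_pos.2 hu) (inv_ne_one.2 hu_ne)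
  rw [Real.log_inv] at h
  linarith

theorem div_add_lt_log_add_div {t c : ℝ} (ht : 0 < t) (htc : 0 < t + c) (hc : c ≠ 0) :
    c / (t + c) < Real.log ((t + c) / t) := by
  have hne : (t + c) / t ≠ 1 := by simpa [div_eq_one_iff_eq ht.ne'] using hc
  calc c / (t + c) = 1 - ((t + c) / t)⁻¹ := by field_simp; ring
    _ < Real.log ((t + c) / t) := one_sub_inv_lt_log_of_pos (div_pos htc ht) hne

theorem hasDerivAt_log_add_div {t c : ℝ} (ht : t ≠ 0) (htc : t + c ≠ 0) :
    HasDerivAt (fun s : ℝ => Real.log ((s + c) / s)) ((t + c)⁻¹ - t⁻¹) t := by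
  have hquot : HasDerivAt (fun s : ℝ => (s + c) / s) ((1 * t - (t + c) * 1) / t ^ 2) t :=
    ((hasDerivAt_id' t).add_const c).fun_div (hasDerivAt_id' t) ht
  refine (hquot.log (div_ne_zero htc ht)).congr_deriv ?_
  field_simp

theorem tendsto_log_add_div_atTop (c : ℝ) :
    Tendsto (fun t : ℝ => Real.log ((t + c) / t)) atTop (nhds 0) := by
  refine (Real.tendsto_log_comp_add_sub_log c).congr' ?_
  filter_upwards [eventually_gt_atTop 0, eventually_gt_atTop (-c)] with t ht htc
  rw [Real.log_div (by linarith) ht.ne']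

theorem stmt1 : ∀ x : ℝ, 0 < x →
    incGamma 0 x < Real.exp (-x) * Real.log ((x + 1) / x) := by
  intro x hx
  have hderiv : ∀ t ∈ Ici x, HasDerivAt (fun s => Real.exp (-s) * Real.log ((s + 1) / s))
      (Real.exp (-t) * -1 * Real.log ((t + 1) / t) + Real.exp (-t) * ((t + 1)⁻¹ - t⁻¹)) t := by
    intro t ht
    have ht_pos : 0 < t := hx.trans_le ht
    exact (hasDerivAt_neg t).exp.fun_mul (hasDerivAt_log_add_div ht_pos.ne' (by positivity))
  have hlim : Tendsto (fun t => Real.exp (-t) * Real.log ((t + 1) / t)) atTop (nhds 0) := by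
    simpa using Real.tendsto_exp_neg_atTop_nhds_zero.mul (tendsto_log_add_div_atTop 1)
  refine incGamma_lt_of_lt_neg_deriv hx.le hderiv hlim fun t ht => ?_
  have ht_pos : 0 < t := hx.trans ht
  have hlog : 1 / (t + 1) < Real.log ((t + 1) / t) :=
    div_add_lt_log_add_div ht_pos (by positivity) one_ne_zero
  calc t ^ ((0 : ℝ) - 1) * Real.exp (-t)
      = Real.exp (-t) * (1 / (t + 1)) - Real.exp (-t) * ((t + 1)⁻¹ - t⁻¹) := by
        rw [zero_sub, Real.rpow_neg_one]; ring
    _ < Real.exp (-t) * Real.log ((t + 1) / t) - Real.exp (-t) * ((t + 1)⁻¹ - t⁻¹) := by gcongr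
    _ = _ := by ring
end

section
/- Let a be a real number with a < -1. Then for every real x > 0, g_a^lo(x) < Γ(a,x) < g_a^hi(x). Moreover, the upper bound holds more generally: for every real a < 0 and every real x > 0, Γ(a,x) < g_a^hi(x) = x^a e^(−x)/(x−a). -/
/-!
All three functions tend to `0` at infinity, so it suffices to compare derivatives. Up to the common
factor `-t^(a-1) e^(-t)`, the derivatives of `Γ(a,·)`, `g_a^hi` and `g_a^lo` at `t` are
`1`, `1 + t/(t-a)^2` and `1 - 2t^2/((t-a)^2+a)^2`, respectively.

The upper bound therefore holds wherever `x > max(a, 0)`. For the lower bound the denominator must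
not vanish on `[x, ∞)`; if it is positive at some `x > 0`, then it stays positive on `[x, ∞)`.
-/

open Real Filter Set

open MeasureTheory Topology

section General

theorem lt_of_strictMonoOn_Ici_of_tendsto {α β : Type*} [LinearOrder α] [NoMaxOrder α]
    [Preorder β] [TopologicalSpace β] [ClosedIciTopology β] {f : α → β} {x : α} {l : β}
    (hf : StrictMonoOn f (Ici x)) (hlim : Tendsto f atTop (𝓝 l)) : f x < l := by
  obtain ⟨y, hxy⟩ := exists_gt x
  have hbound : ∀ᶠ z in atTop, f y ≤ f z := by
    filter_upwards [eventually_ge_atTop y] with z hyz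
    exact hf.monotoneOn hxy.le (hxy.le.trans hyz) hyz
  have : Nonempty α := ⟨x⟩
  exact (hf self_mem_Ici hxy.le hxy).trans_le (ge_of_tendsto hlim hbound)

theorem lt_of_hasDerivAt_lt_of_tendsto {f g f' g' : ℝ → ℝ} {x l : ℝ}
    (hf : ∀ t ∈ Ici x, HasDerivAt f (f' t) t) (hg : ∀ t ∈ Ici x, HasDerivAt g (g' t) t)
    (hlt : ∀ t ∈ Ioi x, g' t < f' t)
    (hf_lim : Tendsto f atTop (𝓝 l)) (hg_lim : Tendsto g atTop (𝓝 l)) : f x < g x := by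
  have hderiv : ∀ t ∈ Ici x, HasDerivAt (f - g) (f' t - g' t) t :=
    fun t ht ↦ (hf t ht).sub (hg t ht)
  have hmono : StrictMonoOn (f - g) (Ici x) := by
    refine strictMonoOn_of_hasDerivWithinAt_pos (f' := f' - g') (convex_Ici x)
      (fun t ht ↦ (hderiv t ht).continuousAt.continuousWithinAt) ?_ ?_ <;>
      rw [interior_Ici]
    · exact fun t ht ↦ (hderiv t (Ioi_subset_Ici_self ht)).hasDerivWithinAt
    · exact fun t ht ↦ sub_pos.2 (hlt t ht)
  have hlim : Tendsto (f - g) atTop (𝓝 0) := sub_self l ▸ hf_lim.sub hg_lim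
  have hsub : (f - g) x < 0 := lt_of_strictMonoOn_Ici_of_tendsto hmono hlim
  exact sub_neg.1 hsub

theorem hasDerivAt_integral_Ioi {E : Type*} [NormedAddCommGroup E] [NormedSpace ℝ E]
    [CompleteSpace E] {f : ℝ → E} {c x : ℝ} (hf : IntegrableOn f (Ioi c)) (hcx : c < x)
    (hfx : ContinuousAt f x) : HasDerivAt (fun y ↦ ∫ t in Ioi y, f t) (-f x) x := by
  have hsplit : (fun y ↦ ∫ t in Ioi y, f t) =ᶠ[𝓝 x]
      fun y ↦ (∫ t in y..x, f t) + ∫ t in Ioi x, f t := by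
    filter_upwards [Ioi_mem_nhds hcx] with y hy
    exact (intervalIntegral.integral_interval_add_Ioi (hf.mono_set (Ioi_subset_Ioi hy.le))
      (hf.mono_set (Ioi_subset_Ioi hcx.le))).symm
  have hmeas : StronglyMeasurableAtFilter f (𝓝 x) :=
    ⟨Ioi c, Ioi_mem_nhds hcx, hf.aestronglyMeasurable⟩
  have hleft : HasDerivAt (fun y ↦ ∫ t in y..x, f t) (-f x) x :=
    intervalIntegral.integral_hasDerivAt_left .refl hmeas hfx
  exact (hleft.add_const _).congr_of_eventuallyEq hsplit

end General

section Integrand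

variable (s : ℝ) {t : ℝ}

theorem hasDerivAt_rpow_mul_exp_neg (ht : 0 < t) :
    HasDerivAt (fun t ↦ t ^ s * exp (-t)) (-(t ^ (s - 1) * exp (-t) * (t - s))) t := by
  refine ((hasDerivAt_rpow_const (Or.inl ht.ne')).mul (hasDerivAt_neg t).exp).congr_deriv ?_
  rw [rpow_sub_one ht.ne']
  field_simp
  ring

theorem tendsto_rpow_mul_exp_neg_atTop : Tendsto (fun t ↦ t ^ s * exp (-t)) atTop (𝓝 0) := by
  simpa using tendsto_rpow_mul_exp_neg_mul_atTop_nhds_zero s 1 one_pos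

theorem integrableOn_rpow_mul_exp_neg_Ioi (ht : 0 < t) :
    IntegrableOn (fun u ↦ u ^ s * exp (-u)) (Ioi t) := by
  refine integrable_of_isBigO_exp_neg one_half_pos (fun u hu ↦ ?_) ?_
  · exact (hasDerivAt_rpow_mul_exp_neg s (ht.trans_le hu)).continuousAt.continuousWithinAt
  · simpa only [mul_comm] using (Gamma_integrand_isLittleO s).isBigO

end Integrand

section Denominator

variable {a x t : ℝ}

theorem sq_sub_add_pos_of_le (hx : 0 < x) (hxt : x ≤ t) (hden : 0 < (x - a) ^ 2 + a) :
    0 < (t - a) ^ 2 + a := by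
  rcases le_or_gt a 0 with ha | ha
  · have hxa : 0 ≤ x - a := by linarith
    exact hden.trans_le (by gcongr)
  · positivity

theorem sq_sub_add_pos_of_le_neg_one (hx : 0 < x) (ha : a ≤ -1) : 0 < (x - a) ^ 2 + a := by
  have hxa : 0 < x * (x - 2 * a) := mul_pos hx (by linarith)
  have haa : 0 ≤ a * (a + 1) := mul_nonneg_of_nonpos_of_nonpos (by linarith) (by linarith)
  linarith

theorem sq_sub_add_pos_of_add_one_le (ht : 0 < t) (hta : a + 1 ≤ t) : 0 < (t - a) ^ 2 + a := by
  have hone : 1 ≤ t - a := by linarith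
  calc 0 < (t - a) + a := by rwa [sub_add_cancel]
    _ ≤ (t - a) ^ 2 + a := by gcongr; exact le_self_pow₀ hone two_ne_zero

end Denominator

section DerivativesAndLimits

variable {a t : ℝ}

theorem hasDerivAt_incGamma (ht : 0 < t) :
    HasDerivAt (incGamma a) (-(t ^ (a - 1) * exp (-t))) t :=
  hasDerivAt_integral_Ioi (integrableOn_rpow_mul_exp_neg_Ioi _ (half_pos ht)) (half_lt_self ht)
    (hasDerivAt_rpow_mul_exp_neg _ ht).continuousAt

theorem tendsto_incGamma_atTop : Tendsto (incGamma a) atTop (𝓝 0) :=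
  tendsto_integral_Ioi_zero tendsto_id

theorem hasDerivAt_gHi (ht : 0 < t) (hta : t ≠ a) :
    HasDerivAt (gHi a) (-(t ^ (a - 1) * exp (-t) * (1 + t / (t - a) ^ 2))) t := by
  have hne : t - a ≠ 0 := sub_ne_zero.2 hta
  refine ((hasDerivAt_rpow_mul_exp_neg a ht).div ((hasDerivAt_id t).sub_const a) hne).congr_deriv ?_
  simp only [id, rpow_sub_one ht.ne']
  field_simp
  ring

theorem hasDerivAt_gLo (ht : 0 < t) (hne : (t - a) ^ 2 + a ≠ 0) :
    HasDerivAt (gLo a)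
      (-(t ^ (a - 1) * exp (-t) * (1 - 2 * t ^ 2 / ((t - a) ^ 2 + a) ^ 2))) t := by
  have hlin : HasDerivAt (fun t ↦ t - a) 1 t := (hasDerivAt_id t).sub_const a
  refine (((hasDerivAt_rpow_mul_exp_neg a ht).mul (hlin.sub_const 1)).div
    ((hlin.pow 2).add_const a) hne).congr_deriv ?_
  simp only [Pi.mul_apply, Pi.pow_apply, rpow_sub_one ht.ne']
  field_simp
  ring

theorem tendsto_gHi_atTop : Tendsto (gHi a) atTop (𝓝 0) :=
  (tendsto_rpow_mul_exp_neg_atTop a).div_atTop (tendsto_atTop_add_const_right _ (-a) tendsto_id)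

theorem gLo_nonneg (ht : 0 < t) (hta : a + 1 ≤ t) : 0 ≤ gLo a t := by
  have hnum : 0 ≤ t - a - 1 := by linarith
  have hden : 0 < (t - a) ^ 2 + a := sq_sub_add_pos_of_add_one_le ht hta
  unfold gLo
  positivity

theorem gLo_le_gHi (ht : 0 < t) (hta : a + 1 ≤ t) : gLo a t ≤ gHi a t := by
  have hden : 0 < (t - a) ^ 2 + a := sq_sub_add_pos_of_add_one_le ht hta
  have hsub : 0 < t - a := by linarith
  have hfactor : (t - a - 1) / ((t - a) ^ 2 + a) ≤ 1 / (t - a) := by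
    rw [div_le_div_iff₀ hden hsub]
    linarith [sq_nonneg (t - a)]
  calc gLo a t = t ^ a * exp (-t) * ((t - a - 1) / ((t - a) ^ 2 + a)) := mul_div_assoc _ _ _
    _ ≤ t ^ a * exp (-t) * (1 / (t - a)) := by gcongr
    _ = gHi a t := mul_one_div _ _

theorem tendsto_gLo_atTop : Tendsto (gLo a) atTop (𝓝 0) := by
  refine tendsto_of_tendsto_of_tendsto_of_le_of_le' tendsto_const_nhds
    (tendsto_gHi_atTop (a := a)) ?_ ?_ <;>
    filter_upwards [eventually_gt_atTop 0, eventually_ge_atTop (a + 1)] with t ht hta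
  · exact gLo_nonneg ht hta
  · exact gLo_le_gHi ht hta

end DerivativesAndLimits

section Bounds

variable {a x : ℝ}

theorem incGamma_lt_gHi (hx : 0 < x) (hax : a < x) : incGamma a x < gHi a x := by
  refine lt_of_hasDerivAt_lt_of_tendsto (fun t ht ↦ hasDerivAt_incGamma (hx.trans_le ht))
    (fun t ht ↦ hasDerivAt_gHi (hx.trans_le ht) (hax.trans_le ht).ne') (fun t ht ↦ ?_)
    tendsto_incGamma_atTop tendsto_gHi_atTop
  have ht0 : 0 < t := hx.trans ht
  have hta : 0 < t - a := sub_pos.2 (hax.trans ht)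
  have hfactor : 1 < 1 + t / (t - a) ^ 2 := lt_add_of_pos_right 1 (by positivity)
  exact neg_lt_neg (lt_mul_of_one_lt_right (by positivity) hfactor)

theorem gLo_lt_incGamma (hx : 0 < x) (hden : 0 < (x - a) ^ 2 + a) : gLo a x < incGamma a x := by
  have hden' : ∀ t ∈ Ici x, 0 < (t - a) ^ 2 + a := fun t ht ↦ sq_sub_add_pos_of_le hx ht hden
  refine lt_of_hasDerivAt_lt_of_tendsto
    (fun t ht ↦ hasDerivAt_gLo (hx.trans_le ht) (hden' t ht).ne')
    (fun t ht ↦ hasDerivAt_incGamma (hx.trans_le ht)) (fun t ht ↦ ?_)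
    tendsto_gLo_atTop tendsto_incGamma_atTop
  have ht0 : 0 < t := hx.trans ht
  have hden_t := hden' t (Ioi_subset_Ici_self ht)
  have hfactor : 1 - 2 * t ^ 2 / ((t - a) ^ 2 + a) ^ 2 < 1 := sub_lt_self 1 (by positivity)
  exact neg_lt_neg (mul_lt_of_lt_one_right (by positivity) hfactor)

end Bounds

theorem stmt6_general {a x : ℝ} (hx : 0 < x) :
    (0 < (x - a) ^ 2 + a → gLo a x < incGamma a x) ∧ (a < x → incGamma a x < gHi a x) :=
  ⟨gLo_lt_incGamma hx, incGamma_lt_gHi hx⟩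

theorem stmt6 :
    (∀ a : ℝ, a < -1 → ∀ x : ℝ, 0 < x →
      gLo a x < incGamma a x ∧ incGamma a x < gHi a x) ∧
    (∀ a : ℝ, a < 0 → ∀ x : ℝ, 0 < x →
      incGamma a x < gHi a x ∧ gHi a x = x ^ a * Real.exp (-x) / (x - a)) :=
  ⟨fun a ha x hx ↦ ⟨(stmt6_general hx).1 (sq_sub_add_pos_of_le_neg_one hx ha.le),
    (stmt6_general hx).2 (by linarith)⟩,
  fun a ha x hx ↦ ⟨(stmt6_general hx).2 (ha.trans hx), rfl⟩⟩
end

section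
/- For each real a < -1, the supremum over x > 0 of the ratio g_a^hi(x)/g_a^lo(x) = ((x−a)^2 + a)/((x−a−1)(x−a)) equals 2/(1 + √(1 + 1/a)), attained at x = √(a(a+1)); consequently, this supremum tends to 1 as a → −∞. -/
/-!
Put `s = √(1 + 1/a)`, so that `a s² = a + 1`, that is, `1 / (1 + s) = a (s - 1)`. With `y = x - a`
the ratio is `(y² + a) / ((y - 1) y)`, and `2 / (1 + s)` is a level `c` at which the quadratic
`c (y - 1) y - (y² + a)` has a double root: it equals `-a ((1 - s) y - 1)²`. For `a < 0` and `y > 1`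
this is nonnegative, and it vanishes only at `y = 1 / (1 - s) = -a (1 + s)`, which is
`x = -a s = √(a (a + 1))`.
-/

open Real Filter Set

section BoundRatio

variable {K : Type*} [Field K] {a s y : K}

/-- The ratio `g_a^hi(x) / g_a^lo(x)`, free of its transcendental factors and written in the shifted
variable `y = x - a`. At its poles `y = 0` and `y = 1` the division returns `0`. -/
def boundRatio (a y : K) : K := (y ^ 2 + a) / ((y - 1) * y)

lemma inv_one_add_eq_mul_sub_one (hs : a * s ^ 2 = a + 1) : (1 + s)⁻¹ = a * (s - 1) :=
  inv_eq_of_mul_eq_one_right (by linear_combination hs)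

lemma two_div_one_add_sub_boundRatio (hs : a * s ^ 2 = a + 1) (hy₀ : y ≠ 0) (hy₁ : y - 1 ≠ 0) :
    2 / (1 + s) - boundRatio a y = -a * ((1 - s) * y - 1) ^ 2 / ((y - 1) * y) := by
  have double_root :
      2 * (a * (s - 1)) * ((y - 1) * y) - (y ^ 2 + a) = -a * ((1 - s) * y - 1) ^ 2 := by
    linear_combination y ^ 2 * hs
  rw [boundRatio, div_eq_mul_inv 2, inv_one_add_eq_mul_sub_one hs,
    sub_div' (mul_ne_zero hy₁ hy₀), double_root]

lemma boundRatio_neg_mul_one_add (hs : a * s ^ 2 = a + 1) (hs₀ : s ≠ 0) :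
    boundRatio a (-a * (1 + s)) = 2 / (1 + s) := by
  have hroot : (1 - s) * (-a * (1 + s)) = 1 := by linear_combination hs
  have hy₀ : -a * (1 + s) ≠ 0 := right_ne_zero_of_mul_eq_one hroot
  have hy₁ : -a * (1 + s) - 1 ≠ 0 := by
    rw [show -a * (1 + s) - 1 = s * (-a * (1 + s)) by linear_combination hs]
    exact mul_ne_zero hs₀ hy₀
  have hgap := two_div_one_add_sub_boundRatio hs hy₀ hy₁
  rw [hroot, sub_self, zero_pow two_ne_zero, mul_zero, zero_div] at hgap
  exact (sub_eq_zero.1 hgap).symm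

lemma boundRatio_le_two_div_one_add [LinearOrder K] [IsStrictOrderedRing K] (ha : a < 0)
    (hs : a * s ^ 2 = a + 1) (hy : 1 < y) : boundRatio a y ≤ 2 / (1 + s) := by
  have hy₀ : 0 < y := one_pos.trans hy
  have hy₁ : 0 < y - 1 := sub_pos.2 hy
  rw [← sub_nonneg, two_div_one_add_sub_boundRatio hs hy₀.ne' hy₁.ne']
  exact div_nonneg (mul_nonneg (neg_pos.2 ha).le (sq_nonneg _)) (mul_pos hy₁ hy₀).le

end BoundRatio

lemma gHi_div_gLo (a : ℝ) {x : ℝ} (hx : 0 < x) : gHi a x / gLo a x = boundRatio a (x - a) := by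
  have hc : x ^ a * exp (-x) ≠ 0 := by positivity
  rw [gHi, gLo, boundRatio, div_div_div_eq, mul_left_comm, mul_div_mul_left _ _ hc,
    mul_comm (x - a)]

section Sqrt

variable {a : ℝ}

lemma one_add_one_div_pos (ha : a < -1) : 0 < 1 + 1 / a := by
  rw [one_add_div (by linarith)]
  exact div_pos_of_neg_of_neg (by linarith) (by linarith)

lemma mul_sq_sqrt_one_add_one_div (ha : a < -1) : a * √(1 + 1 / a) ^ 2 = a + 1 := by
  have ha₀ : a ≠ 0 := by linarith
  rw [sq_sqrt (one_add_one_div_pos ha).le, mul_add, mul_one, mul_one_div_cancel ha₀]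

lemma sqrt_mul_add_one (ha : a ≠ 0) : √(a * (a + 1)) = |a| * √(1 + 1 / a) := by
  have hsq : a * (a + 1) = a ^ 2 * (1 + 1 / a) := by field
  rw [hsq, sqrt_mul (sq_nonneg a), sqrt_sq_eq_abs]

lemma boundRatio_sqrt_mul_add_one_sub (ha : a < -1) :
    boundRatio a (√(a * (a + 1)) - a) = 2 / (1 + √(1 + 1 / a)) := by
  have hy : √(a * (a + 1)) - a = -a * (1 + √(1 + 1 / a)) := by
    rw [sqrt_mul_add_one (by linarith), abs_of_neg (by linarith)]
    ring
  rw [hy]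
  exact boundRatio_neg_mul_one_add (mul_sq_sqrt_one_add_one_div ha)
    (sqrt_pos.2 (one_add_one_div_pos ha)).ne'

end Sqrt

lemma tendsto_two_div_one_add_sqrt :
    Tendsto (fun a : ℝ ↦ 2 / (1 + √(1 + 1 / a))) atBot (nhds 1) := by
  have hinv : Tendsto (fun a : ℝ ↦ 1 / a) atBot (nhds 0) := tendsto_const_nhds.div_atBot tendsto_id
  have hcont : ContinuousAt (fun t : ℝ ↦ 2 / (1 + √(1 + t))) 0 := by
    fun_prop (disch := positivity)
  have hval : 2 / (1 + √(1 + 0)) = (1 : ℝ) := by norm_num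
  rw [ContinuousAt, hval] at hcont
  exact hcont.comp hinv

theorem stmt8 :
    (∀ a : ℝ, a < -1 →
      (∀ x : ℝ, 0 < x →
        gHi a x / gLo a x = ((x - a) ^ 2 + a) / ((x - a - 1) * (x - a))) ∧
      IsGreatest ((fun x : ℝ => ((x - a) ^ 2 + a) / ((x - a - 1) * (x - a))) '' Set.Ioi 0)
        (2 / (1 + Real.sqrt (1 + 1 / a))) ∧
      ((Real.sqrt (a * (a + 1)) - a) ^ 2 + a) /
          ((Real.sqrt (a * (a + 1)) - a - 1) * (Real.sqrt (a * (a + 1)) - a)) =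
        2 / (1 + Real.sqrt (1 + 1 / a))) ∧
    Filter.Tendsto (fun a : ℝ => 2 / (1 + Real.sqrt (1 + 1 / a))) Filter.atBot (nhds 1) := by
  refine ⟨fun a ha ↦ ?_, tendsto_two_div_one_add_sqrt⟩
  have hx₀ : 0 < √(a * (a + 1)) := sqrt_pos.2 (mul_pos_of_neg_of_neg (by linarith) (by linarith))
  have hmax := boundRatio_sqrt_mul_add_one_sub ha
  have hle : ∀ x ∈ Ioi (0 : ℝ), boundRatio a (x - a) ≤ 2 / (1 + √(1 + 1 / a)) := fun x hx ↦
    boundRatio_le_two_div_one_add (by linarith) (mul_sq_sqrt_one_add_one_div ha)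
      (by linarith [mem_Ioi.1 hx])
  exact ⟨fun x hx ↦ gHi_div_gLo a hx, ⟨⟨_, hx₀, hmax⟩, forall_mem_image.2 hle⟩, hmax⟩
end

section
/- Let a be a real number with a ≥ 1. Then Γ(a,x) ≥ x^(a−1) e^(−x) for all real x > 0, and Γ(a,x) ≤ x^(a−1) e^(−x)/(1 − (a−1)/x) for all real x > a−1. -/
/-!
On `(x, ∞)` the integrand `t ^ (a - 1) * exp (-t)` is compared with exponentials that agree with it
at `t = x`. It is at least `x ^ (a - 1) * exp (-t)` by monotonicity. Conversely, `u ≤ exp (u - 1)`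
at `u = t / x` shows that it is at most
`x ^ (a - 1) * exp (-x) * exp (-((1 - (a - 1) / x) * (t - x)))`, whose decay rate
`1 - (a - 1) / x` is positive when `x > a - 1`.
-/

open Real Filter Set

open MeasureTheory

theorem rpow_le_exp_mul_sub_one {s u : ℝ} (hs : 0 ≤ s) (hu : 0 ≤ u) :
    u ^ s ≤ exp (s * (u - 1)) := by
  have u_le_exp : u ≤ exp (u - 1) := by simpa using add_one_le_exp (u - 1)
  calc u ^ s ≤ exp (u - 1) ^ s := rpow_le_rpow hu u_le_exp hs
    _ = exp (s * (u - 1)) := by rw [← exp_mul, mul_comm]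

theorem rpow_mul_exp_neg_le {s x t : ℝ} (hs : 0 ≤ s) (hx : 0 < x) (ht : 0 ≤ t) :
    t ^ s * exp (-t) ≤ x ^ s * exp (-x) * exp (-((1 - s / x) * (t - x))) := by
  have htx : 0 ≤ t / x := div_nonneg ht hx.le
  calc t ^ s * exp (-t) = x ^ s * (t / x) ^ s * exp (-t) := by
        rw [← mul_rpow hx.le htx, mul_div_cancel₀ t hx.ne']
    _ ≤ x ^ s * exp (s * (t / x - 1)) * exp (-t) := by
        gcongr
        exact rpow_le_exp_mul_sub_one hs htx
    _ = x ^ s * exp (-x) * exp (-((1 - s / x) * (t - x))) := by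
        rw [mul_assoc, mul_assoc, ← exp_add, ← exp_add]
        congr 2
        field_simp
        ring

theorem exp_neg_mul_sub (c t x : ℝ) : exp (-(c * (t - x))) = exp (c * x) * exp (-c * t) := by
  rw [← exp_add]
  ring_nf

theorem integrableOn_exp_neg_mul_sub_Ioi {c : ℝ} (hc : 0 < c) (x : ℝ) :
    IntegrableOn (fun t => exp (-(c * (t - x)))) (Ioi x) := by
  simp only [exp_neg_mul_sub]
  exact (integrableOn_exp_mul_Ioi (neg_lt_zero.mpr hc) x).const_mul _

theorem integral_exp_neg_mul_sub_Ioi {c : ℝ} (hc : 0 < c) (x : ℝ) :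
    ∫ t in Ioi x, exp (-(c * (t - x))) = c⁻¹ := by
  calc ∫ t in Ioi x, exp (-(c * (t - x))) = exp (c * x) * (-exp (-c * x) / -c) := by
        simp only [exp_neg_mul_sub, integral_const_mul, integral_exp_mul_Ioi (neg_lt_zero.mpr hc)]
    _ = c⁻¹ := by
        rw [neg_div_neg_eq, ← mul_div_assoc, ← exp_add, neg_mul, add_neg_cancel, exp_zero, one_div]

theorem integrableOn_rpow_sub_one_mul_exp_neg_Ioi {a x : ℝ} (ha : 0 < a) (hx : 0 ≤ x) :
    IntegrableOn (fun t => t ^ (a - 1) * exp (-t)) (Ioi x) := by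
  simpa only [mul_comm] using (GammaIntegral_convergent ha).mono_set (Ioi_subset_Ioi hx)

theorem rpow_mul_exp_neg_le_incGamma {a x : ℝ} (ha : 1 ≤ a) (hx : 0 ≤ x) :
    x ^ (a - 1) * exp (-x) ≤ incGamma a x := by
  calc x ^ (a - 1) * exp (-x) = ∫ t in Ioi x, x ^ (a - 1) * exp (-t) := by
        rw [integral_const_mul, integral_exp_neg_Ioi]
    _ ≤ incGamma a x := by
        refine setIntegral_mono_on ((integrableOn_exp_neg_Ioi x).const_mul _)
          (integrableOn_rpow_sub_one_mul_exp_neg_Ioi (by linarith) hx) measurableSet_Ioi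
          fun t (hxt : x < t) => ?_
        gcongr

theorem incGamma_le_rpow_mul_exp_neg_div {a x : ℝ} (ha : 1 ≤ a) (hx : a - 1 < x) :
    incGamma a x ≤ x ^ (a - 1) * exp (-x) / (1 - (a - 1) / x) := by
  have hs : 0 ≤ a - 1 := sub_nonneg.mpr ha
  have hx₀ : 0 < x := hs.trans_lt hx
  have rate_pos : 0 < 1 - (a - 1) / x := sub_pos.mpr ((div_lt_one hx₀).mpr hx)
  calc incGamma a x
      ≤ ∫ t in Ioi x, x ^ (a - 1) * exp (-x) * exp (-((1 - (a - 1) / x) * (t - x))) :=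
        setIntegral_mono_on (integrableOn_rpow_sub_one_mul_exp_neg_Ioi (by linarith) hx₀.le)
          ((integrableOn_exp_neg_mul_sub_Ioi rate_pos x).const_mul _) measurableSet_Ioi
          fun t ht => rpow_mul_exp_neg_le hs hx₀ (hx₀.trans ht).le
    _ = x ^ (a - 1) * exp (-x) / (1 - (a - 1) / x) := by
        rw [integral_const_mul, integral_exp_neg_mul_sub_Ioi rate_pos, ← div_eq_mul_inv]

theorem stmt12 (a : ℝ) (ha : 1 ≤ a) :
    (∀ x : ℝ, 0 < x → x ^ (a - 1) * Real.exp (-x) ≤ incGamma a x) ∧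
    (∀ x : ℝ, a - 1 < x →
      incGamma a x ≤ x ^ (a - 1) * Real.exp (-x) / (1 - (a - 1) / x)) :=
  ⟨fun _ hx => rpow_mul_exp_neg_le_incGamma ha hx.le,
    fun _ hx => incGamma_le_rpow_mul_exp_neg_div ha hx⟩
end
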